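/- Every word-representable graph on n vertices is 2n-representable; that is, it can be represented by a uniform word containing exactly 2n copies of each letter. -/

import Mathlib

/-!
The proof goes through semi-transitive orientations, with reachability replaced by a partial order.

Let `w` represent `G`. For letters `x ≠ y`, write `x < y` if every prefix of `w` contains at least
as many `x` as `y`. This is a strict partial order, refined by the order of first occurrences.
Write `x → y` if moreover every prefix contains at most one more `x` than `y`. Then `x` and `y`
alternate in `w` iff `x → y` or `y → x` (`alternate_iff`), so `→` orients `G`. If `a < b < c` and
`a → c`, the prefix counts of `a`, `b`, `c` are squeezed together, whence `a → b` and `b → c`.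

Fix a vertex `v`, and split the other vertices into in-neighbours `I` and out-neighbours `O` of `v`,
non-neighbours `A` below `v` and `B` above `v`, and vertices `T` incomparable to `v`. List each of
these sets in the order of first occurrences. The 2-uniform word `A I T A v O I v B T O B`
restricts to `xyxy` on every edge `x → y` (`zoneWord_filter_of_arc`), while `v` alternates with none
of its non-neighbours (`zoneWord_not_alternate`). Concatenating these words over all `n` vertices
`v` keeps every edge alternating and destroys every non-edge, and uses each letter `2n` times.
-/

/-- Letters `x` and `y` alternate in the word `w` if the subsequence of `w` consisting of
all occurrences of `x` and `y` has no two equal consecutive letters (i.e. is of the form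
`xyxy⋯` or `yxyx⋯`). -/
def Alternate {V : Type*} [DecidableEq V] (w : List V) (x y : V) : Prop :=
  (w.filter (fun z => decide (z = x ∨ z = y))).Chain' (· ≠ ·)

/-- A word `w` over `V` represents the simple graph `G` if it contains every letter of `V`
and distinct letters alternate in `w` iff they are adjacent in `G`. -/
def Represents {V : Type*} [DecidableEq V] (w : List V) (G : SimpleGraph V) : Prop :=
  (∀ v : V, v ∈ w) ∧ ∀ x y : V, x ≠ y → (Alternate w x y ↔ G.Adj x y)

/-- A graph is word-representable if some word represents it. -/
def WordRepresentable {V : Type*} [DecidableEq V] (G : SimpleGraph V) : Prop :=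
  ∃ w : List V, Represents w G

/-- A graph is `k`-representable if some `k`-uniform word (every letter occurring
exactly `k` times) represents it. -/
def KRepresentable {V : Type*} [DecidableEq V] (G : SimpleGraph V) (k : ℕ) : Prop :=
  ∃ w : List V, (∀ v : V, w.count v = k) ∧ Represents w G

/-! ### Alternation in terms of prefix counts -/

/-- Every prefix of `w` contains at least as many `x` as `y`, and at most one more. For `x ≠ y`,
this says that `x` and `y` alternate in `w` with `x` coming first (if either occurs). -/
def Leads {V : Type*} [DecidableEq V] (w : List V) (x y : V) : Prop :=
  ∀ n, (w.take n).count y ≤ (w.take n).count x ∧ (w.take n).count x ≤ (w.take n).count y + 1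

section Leads

variable {V : Type*} [DecidableEq V]

theorem leads_nil (x y : V) : Leads [] x y := by simp [Leads]

theorem leads_cons_left {w : List V} {x y : V} (h : x ≠ y) :
    Leads (x :: w) x y ↔ Leads w y x := by
  constructor
  · intro H n
    have := H (n + 1)
    simp only [List.take_succ_cons, List.count_cons_self, List.count_cons_of_ne h] at this
    omega
  · intro H n
    cases n with
    | zero => simp
    | succ n =>
      have := H n
      simp only [List.take_succ_cons, List.count_cons_self, List.count_cons_of_ne h]
      omega

theorem not_leads_cons_right {w : List V} {x y : V} (h : x ≠ y) :
    ¬ Leads (y :: w) x y := by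
  intro H
  have := H 1
  simp [h.symm] at this

theorem leads_cons_other {w : List V} {x y z : V} (hx : z ≠ x) (hy : z ≠ y) :
    Leads (z :: w) x y ↔ Leads w x y := by
  constructor
  · intro H n
    have := H (n + 1)
    simpa only [List.take_succ_cons, List.count_cons_of_ne hx, List.count_cons_of_ne hy] using this
  · intro H n
    cases n with
    | zero => simp
    | succ n =>
      simpa only [List.take_succ_cons, List.count_cons_of_ne hx, List.count_cons_of_ne hy] using H n

theorem isChain_cons_filter_iff {w : List V} {x y : V} (h : x ≠ y) :
    (x :: w.filter (fun z => decide (z = x ∨ z = y))).IsChain (· ≠ ·) ↔ Leads w y x := by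
  induction w generalizing x y with
  | nil => simp [leads_nil]
  | cons z w ih =>
    by_cases hx : z = x
    · subst hx
      simp [not_leads_cons_right h.symm]
    by_cases hy : z = y
    · subst hy
      have hp : (fun a => decide (a = x ∨ a = z)) = fun a => decide (a = z ∨ a = x) := by
        funext a; simp [or_comm]
      rw [leads_cons_left h.symm, ← ih h.symm, List.filter_cons_of_pos (by simp), hp]
      simp [List.isChain_cons_cons, h]
    · rw [leads_cons_other hy hx, ← ih h, List.filter_cons_of_neg (by simp [hx, hy])]

theorem alternate_def (w : List V) (x y : V) : Alternate w x y ↔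
    (w.filter (fun z => decide (z = x ∨ z = y))).IsChain (· ≠ ·) := Iff.rfl

theorem alternate_comm (w : List V) (x y : V) : Alternate w x y ↔ Alternate w y x := by
  have hp : (fun a => decide (a = x ∨ a = y)) = fun a => decide (a = y ∨ a = x) := by
    funext a; simp [or_comm]
  simp only [alternate_def, hp]

theorem alternate_cons_left {w : List V} {x y : V} (h : x ≠ y) :
    Alternate (x :: w) x y ↔ Leads (x :: w) x y ∨ Leads (x :: w) y x := by
  have := isChain_cons_filter_iff (w := w) h
  simp only [leads_cons_left h, not_leads_cons_right h.symm, or_false, ← this]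
  rw [alternate_def, List.filter_cons_of_pos (by simp)]

theorem alternate_iff {w : List V} {x y : V} (h : x ≠ y) :
    Alternate w x y ↔ Leads w x y ∨ Leads w y x := by
  induction w with
  | nil => simp [leads_nil, alternate_def]
  | cons z w ih =>
    by_cases hx : z = x
    · subst hx; exact alternate_cons_left h
    by_cases hy : z = y
    · subst hy; rw [alternate_comm, alternate_cons_left h.symm, or_comm]
    · rw [leads_cons_other hy hx, leads_cons_other hx hy, ← ih, alternate_def,
        List.filter_cons_of_neg (by simp [hx, hy]), alternate_def]

/-- If prefixes of `w` never contain more `y` than `x`, and `y ≠ x` occurs in `w`,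
then `x` first occurs before `y`. -/
theorem idxOf_lt_of_count_le {w : List V} {x y : V} (hy : y ∈ w) (hne : x ≠ y)
    (H : ∀ n, (w.take n).count y ≤ (w.take n).count x) : w.idxOf x < w.idxOf y := by
  have hlt : w.idxOf y < w.length := List.idxOf_lt_length_of_mem hy
  have hy' : y ∈ w.take (w.idxOf y + 1) :=
    List.mem_take_iff_getElem.2 ⟨w.idxOf y, by omega, by simp⟩
  have hx' : x ∈ w.take (w.idxOf y + 1) :=
    List.count_pos_iff.1 ((List.count_pos_iff.2 hy').trans_le (H _))
  have hx : x ∈ w := List.mem_of_mem_take hx'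
  have h1 : w.idxOf x < w.idxOf y + 1 := by
    have h2 := List.idxOf_lt_length_of_mem hx'
    have h3 : (w.take (w.idxOf y + 1)).idxOf x = w.idxOf x := by
      conv_rhs => rw [← List.take_append_drop (w.idxOf y + 1) w]
      rw [List.idxOf_append_of_mem hx']
    rw [h3] at h2
    exact h2.trans_le (List.length_take_le _ _)
  have h4 : w.idxOf x ≠ w.idxOf y := fun h => hne ((List.idxOf_inj hx).1 h)
  omega

end Leads

/-! ### The word attached to a vertex -/

/-- Position of a vertex relative to a fixed vertex `v`: `v` itself, in- and out-neighbours of `v`,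
non-neighbours below and above `v`, and vertices incomparable to `v`. -/
inductive Zone
  | self | inN | outN | below | above | incomp
  deriving DecidableEq

section ZoneWord

variable {V : Type*} [DecidableEq V]

open Classical in
/-- The zone of `x` relative to `v`, for the strict order `lt` and the orientation `D`. -/
noncomputable def zone (lt D : V → V → Prop) (v x : V) : Zone :=
  if x = v then .self else if D x v then .inN else if D v x then .outN
  else if lt x v then .below else if lt v x then .above else .incomp

/-- The word `A I T A v O I v B T O B` at `v`, where each letter stands for the vertices in one
zone of `v`, listed in the order of `L`. -/
noncomputable def zoneWord (lt D : V → V → Prop) (L : List V) (v : V) : List V :=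
  [Zone.below, .inN, .incomp, .below, .self, .outN, .inN, .self, .above, .incomp, .outN,
    .above].flatMap fun k => L.filter fun x => decide (zone lt D v x = k)

theorem zoneWord_count {lt D : V → V → Prop} {L : List V} (hnd : L.Nodup) (hall : ∀ x, x ∈ L)
    (v x : V) : (zoneWord lt D L v).count x = 2 := by
  have key : ∀ k : Zone, (L.filter fun x => decide (zone lt D v x = k)).count x =
      if zone lt D v x = k then 1 else 0 := by
    intro k
    rw [(hnd.filter _).count]
    simp [hall]
  simp only [zoneWord, List.flatMap_cons, List.flatMap_nil, List.count_append, key]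
  cases zone lt D v x <;> simp

theorem zoneWord_filter (lt D : V → V → Prop) (L : List V) (v : V) (p : V → Bool) :
    (zoneWord lt D L v).filter p = zoneWord lt D (L.filter p) v := by
  simp only [zoneWord, List.flatMap_cons, List.flatMap_nil, List.filter_append, List.filter_nil,
    List.filter_filter, Bool.and_comm]

variable {lt D : V → V → Prop}

/-- Any arc `x → y` joins two zones whose blocks interleave with that of `x` first. -/
theorem zoneWord_pair_of_arc (htrans : ∀ a b c, lt a b → lt b c → lt a c)
    (hirr : ∀ a, ¬ lt a a) (hD : ∀ a b, D a b → lt a b)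
    (hsemi : ∀ a b c, lt a b → lt b c → D a c → D a b ∧ D b c)
    (v : V) {x y : V} (hxy : D x y) : zoneWord lt D [x, y] v = [x, y, x, y] := by
  have e : ∀ z, (zone lt D v z = .self ∧ z = v) ∨ (zone lt D v z = .inN ∧ D z v) ∨
      (zone lt D v z = .outN ∧ D v z) ∨
      (zone lt D v z = .below ∧ lt z v ∧ ¬ D z v) ∨
      (zone lt D v z = .above ∧ lt v z ∧ ¬ D v z) ∨
      (zone lt D v z = .incomp ∧ ¬ lt z v ∧ ¬ lt v z) := by
    intro z
    unfold zone
    split_ifs <;> simp_all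
  have hlt := hD _ _ hxy
  rcases e x with ⟨ex, hx⟩ | ⟨ex, hx⟩ | ⟨ex, hx⟩ | ⟨ex, hx⟩ | ⟨ex, hx⟩ | ⟨ex, hx⟩ <;>
  rcases e y with ⟨ey, hy⟩ | ⟨ey, hy⟩ | ⟨ey, hy⟩ | ⟨ey, hy⟩ | ⟨ey, hy⟩ | ⟨ey, hy⟩ <;>
  first
  | (simp [zoneWord, ex, ey]; done)
  | (exfalso; grind)

theorem zoneWord_filter_of_arc (htrans : ∀ a b c, lt a b → lt b c → lt a c)
    (hirr : ∀ a, ¬ lt a a) (hD : ∀ a b, D a b → lt a b)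
    (hsemi : ∀ a b c, lt a b → lt b c → D a c → D a b ∧ D b c)
    {L : List V} (v : V) {x y : V} (hxy : D x y)
    (hL : L.filter (fun z => decide (z = x ∨ z = y)) = [x, y]) :
    (zoneWord lt D L v).filter (fun z => decide (z = x ∨ z = y)) = [x, y, x, y] := by
  rw [zoneWord_filter, hL, zoneWord_pair_of_arc htrans hirr hD hsemi v hxy]

theorem zoneWord_not_alternate {L : List V} {v x : V} (hne : x ≠ v) (h1 : ¬ D x v) (h2 : ¬ D v x)
    (hL : L.filter (fun z => decide (z = x ∨ z = v)) = [x, v] ∨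
      L.filter (fun z => decide (z = x ∨ z = v)) = [v, x]) :
    ¬ Alternate (zoneWord lt D L v) x v := by
  rw [alternate_def, zoneWord_filter]
  have ev : zone lt D v v = .self := by simp [zone]
  have ex : zone lt D v x = .below ∨ zone lt D v x = .above ∨ zone lt D v x = .incomp := by
    unfold zone
    split_ifs <;> simp_all
  rcases hL with hL | hL <;> rw [hL] <;> rcases ex with ex | ex | ex <;>
    simp [zoneWord, ex, ev]

end ZoneWord

/-! ### Assembling the words -/

/-- Listing the vertices by increasing values of an injective `f`, any two vertices appear in the
order given by `f`. -/
theorem exists_sorted_list {V : Type*} [Fintype V] [DecidableEq V] (f : V → ℕ)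
    (hf : Function.Injective f) : ∃ L : List V, L.Nodup ∧ (∀ x, x ∈ L) ∧
      ∀ x y, f x < f y → L.filter (fun z => decide (z = x ∨ z = y)) = [x, y] := by
  let _ : LinearOrder V := LinearOrder.lift' f hf
  refine ⟨Finset.univ.sort (· ≤ ·), Finset.sort_nodup _ _, by simp, fun x y hxy => ?_⟩
  have hne : x ≠ y := fun h => by simp [h] at hxy
  refine List.Perm.eq_of_pairwise (le := (· ≤ ·)) (fun a b _ _ => le_antisymm)
    ((Finset.pairwise_sort _ _).filter _) ?_ ?_
  · simpa using (show x ≤ y from hxy.le)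
  · rw [List.perm_ext_iff_of_nodup ((Finset.sort_nodup _ _).filter _) (by simpa using hne)]
    simp

/-- Concatenating blocks `xyxy` gives an alternating sequence. -/
theorem isChain_flatMap_pair {V ι : Type*} {x y : V} (hne : x ≠ y) (l : List ι) :
    (l.flatMap fun _ => [x, y, x, y]).IsChain (· ≠ ·) := by
  induction l with
  | nil => simp
  | cons a l ih =>
    cases l with
    | nil => simp [hne, hne.symm]
    | cons b l =>
      simp only [List.flatMap_cons, List.cons_append, List.nil_append, List.isChain_cons_cons]
        at ih ⊢
      simp [hne, hne.symm, ih]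

/-- A strict order `lt` and an orientation `D ⊆ lt` of `G` satisfying `hsemi` (the analogue of
semi-transitivity) yield a `2n`-uniform representant: the concatenation of all vertex words.
The rank function `f` provides a linear extension of `lt`. -/
theorem kRepresentable_of_semiTransitive {V : Type*} [Fintype V] [DecidableEq V]
    (G : SimpleGraph V) (lt D : V → V → Prop) (f : V → ℕ) (hf : Function.Injective f)
    (hltf : ∀ a b, lt a b → f a < f b)
    (htrans : ∀ a b c, lt a b → lt b c → lt a c) (hD : ∀ a b, D a b → lt a b)
    (hsemi : ∀ a b c, lt a b → lt b c → D a c → D a b ∧ D b c)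
    (hG : ∀ a b, G.Adj a b ↔ D a b ∨ D b a) :
    KRepresentable G (2 * Fintype.card V) := by
  obtain ⟨L, hnd, hall, hL⟩ := exists_sorted_list f hf
  have hirr : ∀ a, ¬ lt a a := fun a h => (hltf a a h).false
  have hcount : ∀ v, ((L.flatMap (zoneWord lt D L)).count v) = 2 * Fintype.card V := by
    intro v
    have hlen : L.length = Fintype.card V := by
      rw [← List.toFinset_card_of_nodup hnd, ← Finset.card_univ]
      congr 1
      ext; simp [hall]
    simp [List.count_flatMap, Function.comp_def, zoneWord_count hnd hall, hlen, mul_comm]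
  have harc : ∀ x y, D x y → Alternate (L.flatMap (zoneWord lt D L)) x y := by
    intro x y hxy
    have hlt := hltf _ _ (hD _ _ hxy)
    have hne : x ≠ y := fun h => by simp [h] at hlt
    rw [alternate_def, List.filter_flatMap]
    simp only [zoneWord_filter_of_arc htrans hirr hD hsemi _ hxy (hL x y hlt)]
    exact isChain_flatMap_pair hne L
  refine ⟨L.flatMap (zoneWord lt D L), hcount, fun v => ?_, fun x y hne => ⟨fun halt => ?_, ?_⟩⟩
  · have : Nonempty V := ⟨v⟩
    rw [← List.count_pos_iff, hcount]
    have := Fintype.card_pos (α := V)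
    omega
  · by_contra hadj
    rw [hG, not_or] at hadj
    refine zoneWord_not_alternate (lt := lt) (L := L) hne hadj.1 hadj.2 ?_ ?_
    · rcases lt_or_gt_of_ne (hf.ne hne) with h | h
      · exact Or.inl (hL x y h)
      · right
        rw [← hL y x h]
        simp only [or_comm]
    · have hinf : zoneWord lt D L y <:+: L.flatMap (zoneWord lt D L) := by
        obtain ⟨s, t, hst⟩ := List.append_of_mem (hall y)
        exact ⟨s.flatMap (zoneWord lt D L), t.flatMap (zoneWord lt D L), by
          generalize zoneWord lt D L = g
          simp [hst]⟩
      exact List.IsChain.infix halt (hinf.filter _)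
  · intro hadj
    rcases (hG x y).1 hadj with h | h
    · exact harc x y h
    · exact (alternate_comm _ _ _).1 (harc y x h)

/-- Every word-representable graph on `n` vertices is `2n`-representable. -/
theorem kRepresentable_two_mul_card {V : Type*} [Fintype V] [DecidableEq V]
    (G : SimpleGraph V) (h : WordRepresentable G) :
    KRepresentable G (2 * Fintype.card V) := by
  obtain ⟨w, hmem, hw⟩ := h
  have hltf : ∀ a b, (a ≠ b ∧ ∀ n, (w.take n).count b ≤ (w.take n).count a) →
      w.idxOf a < w.idxOf b := fun a b hab => idxOf_lt_of_count_le (hmem b) hab.1 hab.2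
  have htrans : ∀ a b c, (a ≠ b ∧ ∀ n, (w.take n).count b ≤ (w.take n).count a) →
      (b ≠ c ∧ ∀ n, (w.take n).count c ≤ (w.take n).count b) →
      (a ≠ c ∧ ∀ n, (w.take n).count c ≤ (w.take n).count a) := by
    intro a b c hab hbc
    refine ⟨fun hac => ?_, fun n => (hbc.2 n).trans (hab.2 n)⟩
    have h1 := hltf a b hab
    have h2 := hltf b c hbc
    rw [hac] at h1
    omega
  refine kRepresentable_of_semiTransitive G
    (fun a b => a ≠ b ∧ ∀ n, (w.take n).count b ≤ (w.take n).count a)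
    (fun a b => a ≠ b ∧ Leads w a b) (fun a => w.idxOf a)
    (fun a b hab => (List.idxOf_inj (hmem a)).1 hab) hltf htrans
    (fun a b hab => ⟨hab.1, fun n => (hab.2 n).1⟩) ?_ ?_
  · intro a b c hab hbc hac
    refine ⟨⟨hab.1, fun n => ?_⟩, ⟨hbc.1, fun n => ?_⟩⟩ <;>
    · have h1 := hab.2 n
      have h2 := hbc.2 n
      have h3 := (hac.2 n).2
      omega
  · intro a b
    by_cases hab : a = b
    · simp [hab]
    · rw [← hw a b hab, alternate_iff hab]
      simp [hab, Ne.symm hab]
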